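/- Let A = (a_ij) be an n×n dual quaternion Hermitian matrix and P_ij a switching matrix. Then Cdet(P_ij* A P_ij) = Cdet(A). -/

import Mathlib

/-!
Conjugating `A` by the switching matrix permutes its rows and columns simultaneously
(`switchMatrix_conj`), so the claim is the invariance of the Chen determinant of a Hermitian
matrix under such permutations (`Cdet_submatrix`).

The term of `σ` is a signed ordered product of cycle products, each read off from the leader
(largest element) of the cycle. Its dependence on the labelling comes from the order of the
factors and from the choice of starting points, and both disappear after passing to real parts:
the real part of a dual quaternion is a central dual number, and it is invariant under cyclic
rotation of a product since `Re (xy) = Re (yx)`. Passing to real parts is legitimate inside the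
sum over all `σ`: inverting the cycle led by `a` is an involution of the permutations which keeps
the leaders, hence the sign and all other factors, and for Hermitian `A` conjugates the product
of that cycle (`cycProd_inv`). Averaging over this involution replaces `c` by
`(c + c*) / 2 = Re c` (`hybridTerm_sub_add`). Doing so for one `a` at a time gives
`Cdet A = ∑ σ, ± ∏ Re (cycle product)`, where the inner product runs over the cycles of `σ`
(`Cdet_eq_sum_hybridTerm`, `hybridTerm_univ`).

The sign depends only on the number of cycles, and the inner product may be taken over any set of
representatives of the cycles (`IsTransversal.prod_eq`), so the substitution `σ ↦ τ σ τ⁻¹` finishes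
the proof.
-/


/-!
Formalization background for "Moore Determinant of Dual Quaternion Hermitian Matrices"
(Cui, Qi, Song, Wang).

A dual quaternion is `q = q_s + q_d ε` with `q_s, q_d` quaternions, `ε² = 0`; it is modeled
by `DualNumber (Quaternion ℝ)`.
-/

open Quaternion Matrix

noncomputable section

/-- Dual quaternions: dual numbers over the quaternions. -/
abbrev DualQuaternion : Type := DualNumber (Quaternion ℝ)

namespace DQPaper

/-- Conjugation of dual quaternions: `(q_s + q_d ε)* = q_s* + q_d* ε`. -/
instance : Star DualQuaternion := ⟨fun q => (star q.fst, star q.snd)⟩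

/-- The real part of a dual quaternion `q = q_s + q_d ε`, as the dual number
`Re(q_s) + Re(q_d) ε`. -/
def dqRe (q : DualQuaternion) : DualNumber ℝ := (q.fst.re, q.snd.re)

/-- The embedding of the dual numbers into the dual quaternions. -/
def toDQ (d : DualNumber ℝ) : DualQuaternion := ((d.fst : ℍ[ℝ]), (d.snd : ℍ[ℝ]))

/-- A dual quaternion is a dual number if its standard and dual parts are both real. -/
def IsDualNum (q : DualQuaternion) : Prop := ∃ d : DualNumber ℝ, q = toDQ d

/-- A dual number `a + b ε` is nonnegative if `a > 0`, or `a = 0` and `b ≥ 0`. -/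
def DNNonneg (u : DualNumber ℝ) : Prop := 0 < u.fst ∨ (u.fst = 0 ∧ 0 ≤ u.snd)

/-- The order on dual numbers: `u ≤ v` iff `v - u` is nonnegative. -/
def dnLe (u v : DualNumber ℝ) : Prop := DNNonneg (v - u)

open Classical in
/-- The magnitude of a dual quaternion `p = p_s + p_d ε`, as a dual number:
`|p| = |p_s| + ((p_s* p_d + p_d* p_s)/(2|p_s|)) ε` if `p_s ≠ 0`, and `|p| = |p_d| ε`
otherwise. -/
def dqMag (p : DualQuaternion) : DualNumber ℝ :=
  if p.fst = 0 then (0, ‖p.snd‖)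
  else (‖p.fst‖, ((star p.fst * p.snd + star p.snd * p.fst).re) / (2 * ‖p.fst‖))

/-- The cycle of the permutation `σ` containing `i`, listed as `[i, σ i, σ² i, …]`. -/
def cycleList {n : ℕ} (σ : Equiv.Perm (Fin n)) (i : Fin n) : List (Fin n) :=
  i :: (((List.range n).map (fun k => (σ ^ (k + 1)) i)).takeWhile (fun j => decide (j ≠ i)))

/-- The leaders (largest element of each cycle) of `σ`, listed in decreasing order;
this is the normalization used in the Chen determinant. -/
def chenLeaders {n : ℕ} (σ : Equiv.Perm (Fin n)) : List (Fin n) :=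
  ((List.finRange n).filter (fun i => (cycleList σ i).all (fun j => decide (j ≤ i)))).reverse

/-- All of `Fin n` listed in the normalized cycle order of the Chen determinant:
each cycle is led by its largest element, and cycles are ordered by decreasing leaders
(so the first cycle contains the last index). -/
def chenOrder {n : ℕ} (σ : Equiv.Perm (Fin n)) : List (Fin n) :=
  ((chenLeaders σ).map (cycleList σ)).flatten

/-- The Chen determinant of a square matrix over a (possibly noncommutative) ring:
`Cdet A = Σ_σ (−1)^{n−r} a_σ`, where `σ` runs over all permutations written in the
normalized cycle form with `r` disjoint cycles, and `a_σ` is the ordered product of the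
entries `A i (σ i)` along the normalized cycle order. -/
def Cdet {n : ℕ} {R : Type*} [Ring R] (A : Matrix (Fin n) (Fin n) R) : R :=
  ∑ σ : Equiv.Perm (Fin n),
    (-1 : R) ^ (n - (chenLeaders σ).length) * ((chenOrder σ).map (fun i => A i (σ i))).prod

/-- The leaders (smallest element of each cycle) of `σ`, listed in decreasing order;
this is the normalization used in the Moore determinant. -/
def mooreLeaders {n : ℕ} (σ : Equiv.Perm (Fin n)) : List (Fin n) :=
  ((List.finRange n).filter (fun i => (cycleList σ i).all (fun j => decide (i ≤ j)))).reverse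

/-- All of `Fin n` listed in the normalized cycle order of the Moore determinant:
each cycle is led by its smallest element, and cycles are ordered by decreasing leaders. -/
def mooreOrder {n : ℕ} (σ : Equiv.Perm (Fin n)) : List (Fin n) :=
  ((mooreLeaders σ).map (cycleList σ)).flatten

/-- The Moore determinant of a square matrix over a (possibly noncommutative) ring:
`Mdet A = Σ_σ s(σ) a_σ`, where `s(σ)` is the sign of `σ` and `a_σ` is the ordered product
of the entries `A i (σ i)` along the normalized (Moore) cycle order. -/
def Mdet {n : ℕ} {R : Type*} [Ring R] (A : Matrix (Fin n) (Fin n) R) : R :=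
  ∑ σ : Equiv.Perm (Fin n),
    ((Equiv.Perm.sign σ : ℤ) : R) * ((mooreOrder σ).map (fun i => A i (σ i))).prod

/-- The switching matrix `P_{ij}`: the identity matrix with rows `i` and `j` interchanged. -/
def switchMatrix {R : Type*} [Ring R] {n : ℕ} (i j : Fin n) : Matrix (Fin n) (Fin n) R :=
  Matrix.of fun k l =>
    if (k = i ∧ l = j) ∨ (k = j ∧ l = i) ∨ (k = l ∧ k ≠ i ∧ k ≠ j) then 1 else 0

/-- The multiplication matrix `P_{i;c}`: the identity matrix with the `(i,i)` entry
replaced by `c`. -/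
def mulMatrix {R : Type*} [Ring R] {n : ℕ} (i : Fin n) (c : R) : Matrix (Fin n) (Fin n) R :=
  Matrix.of fun k l => if k = l then (if k = i then c else 1) else 0

/-- The addition matrix `P_{ij;c}`: the identity matrix with an extra entry `c` in
position `(j,i)`, so that `P_{ij;c} * A` adds `c` times row `i` of `A` to row `j`. -/
def addMatrix {R : Type*} [Ring R] {n : ℕ} (i j : Fin n) (c : R) : Matrix (Fin n) (Fin n) R :=
  Matrix.of fun k l => (if k = l then 1 else 0) + (if k = j ∧ l = i then c else 0)

/-- The product `A i₁ i₂ * A i₂ i₃ * ⋯ * A i_{m-1} i_m` of matrix entries along a chain of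
indices `[i₁, …, i_m]`; applied to a closed chain `[i₁, …, i_m, i₁]` it gives the cycle
product `⟨i₁ … i_m i₁⟩ = a_{i₁ i₂} ⋯ a_{i_m i₁}`. -/
def chainProd {n : ℕ} (A : Matrix (Fin n) (Fin n) DualQuaternion) :
    List (Fin n) → DualQuaternion
  | [] => 1
  | [_] => 1
  | i :: j :: rest => A i j * chainProd A (j :: rest)

/-- A dual number `lam` is a (right) eigenvalue of the dual quaternion matrix `A` if
`A x = x lam` for some appreciable dual quaternion vector `x` (i.e. one whose standard
part is nonzero). -/
def IsEigenvalue {n : ℕ} (A : Matrix (Fin n) (Fin n) DualQuaternion)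
    (lam : DualNumber ℝ) : Prop :=
  ∃ x : Fin n → DualQuaternion,
    (fun i => (x i).fst) ≠ 0 ∧ A.mulVec x = fun i => x i * toDQ lam

/-- The dual quaternion Hermitian matrix `A` has the dual numbers `lam 1, …, lam n` as its
eigenvalues (counted with multiplicity), via the unitary diagonalization `U A U* = diag(lam)`
of Qi and Luo (2023). -/
def HasEigenvalues {n : ℕ} (A : Matrix (Fin n) (Fin n) DualQuaternion)
    (lam : Fin n → DualNumber ℝ) : Prop :=
  ∃ U : Matrix (Fin n) (Fin n) DualQuaternion,
    Uᴴ * U = 1 ∧ U * A * Uᴴ = Matrix.diagonal fun i => toDQ (lam i)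

/-! ### Conjugation and real part of dual quaternions -/

theorem dq_star_fst (x : DualQuaternion) : (star x).fst = star x.fst := rfl

theorem dq_star_snd (x : DualQuaternion) : (star x).snd = star x.snd := rfl

theorem dq_star_mul (x y : DualQuaternion) : star (x * y) = star y * star x := by
  apply TrivSqZeroExt.ext
  · simp [dq_star_fst]
  · simp [dq_star_fst, dq_star_snd, add_comm]

theorem dq_star_one : star (1 : DualQuaternion) = 1 := by
  apply TrivSqZeroExt.ext <;> simp [dq_star_fst, dq_star_snd]

theorem dq_star_zero : star (0 : DualQuaternion) = 0 := by
  apply TrivSqZeroExt.ext <;> simp [dq_star_fst, dq_star_snd]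

theorem dq_star_prod (l : List DualQuaternion) :
    star l.prod = (l.map star).reverse.prod := by
  induction l with
  | nil => simp [dq_star_one]
  | cons a l ih => simp [dq_star_mul, ih]

theorem fst_dqRe (q : DualQuaternion) : (dqRe q).fst = q.fst.re := rfl

theorem snd_dqRe (q : DualQuaternion) : (dqRe q).snd = q.snd.re := rfl

theorem fst_toDQ (d : DualNumber ℝ) : (toDQ d).fst = (d.fst : ℍ[ℝ]) := rfl

theorem snd_toDQ (d : DualNumber ℝ) : (toDQ d).snd = (d.snd : ℍ[ℝ]) := rfl

/-- The real part is a trace: it does not see the order of two factors. -/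
theorem dqRe_mul_comm (x y : DualQuaternion) : dqRe (x * y) = dqRe (y * x) := by
  apply TrivSqZeroExt.ext
  · simp only [fst_dqRe, TrivSqZeroExt.fst_mul, Quaternion.re_mul]
    ring
  · simp only [snd_dqRe, TrivSqZeroExt.snd_mul, smul_eq_mul, MulOpposite.smul_eq_mul_unop,
      MulOpposite.unop_op, Quaternion.re_add, Quaternion.re_mul]
    ring

theorem dqRe_prod_of_isRotated {l l' : List DualQuaternion} (h : l ~r l') :
    dqRe l.prod = dqRe l'.prod := by
  obtain ⟨k, rfl⟩ := h
  induction k generalizing l with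
  | zero => simp
  | succ k ih =>
    cases l with
    | nil => simp
    | cons a l =>
      rw [List.rotate_cons_succ, ← ih, List.prod_cons, List.prod_append, dqRe_mul_comm]
      simp

theorem add_star_eq (q : DualQuaternion) : q + star q = toDQ (dqRe q) + toDQ (dqRe q) := by
  apply TrivSqZeroExt.ext
  · ext <;> simp [dq_star_fst, fst_toDQ, fst_dqRe]
  · ext <;> simp [dq_star_snd, snd_toDQ, snd_dqRe]

theorem dqRe_star (q : DualQuaternion) : dqRe (star q) = dqRe q := by
  apply TrivSqZeroExt.ext
  · simp [dq_star_fst, fst_dqRe]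
  · simp [dq_star_snd, snd_dqRe]

/-- `toDQ` as a monoid homomorphism; it transports ordered products of real parts into the
commutative ring of dual numbers. -/
def toDQHom : DualNumber ℝ →* DualQuaternion where
  toFun := toDQ
  map_one' := by
    apply TrivSqZeroExt.ext
    · simp [fst_toDQ]
    · simp [snd_toDQ]
  map_mul' x y := by
    apply TrivSqZeroExt.ext
    · simp [fst_toDQ]
    · simp [snd_toDQ, fst_toDQ]

/-! ### Cycles as lists -/

section Cycles

variable {n : ℕ}

theorem mem_periodicPts_perm (σ : Equiv.Perm (Fin n)) (x : Fin n) :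
    x ∈ Function.periodicPts σ :=
  Function.mem_periodicPts.2 ⟨orderOf σ, orderOf_pos σ, by
    rw [Function.IsPeriodicPt, Function.IsFixedPt, Equiv.Perm.iterate_eq_pow, pow_orderOf_eq_one]
    rfl⟩

/-- `cycleList` stops at the first return to `x`, i.e. after `minimalPeriod σ x` steps. -/
theorem cycleList_eq (σ : Equiv.Perm (Fin n)) (x : Fin n) :
    cycleList σ x =
      (List.range (Function.minimalPeriod σ x)).map fun k => (σ ^ k) x := by
  obtain ⟨p, hp⟩ : ∃ p, Function.minimalPeriod σ x = p + 1 :=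
    Nat.exists_eq_add_one_of_ne_zero
      (Function.minimalPeriod_pos_of_mem_periodicPts (mem_periodicPts_perm σ x)).ne'
  have hle : p + 1 ≤ n := by
    have := Function.minimalPeriod_le_card (f := σ) (x := x)
    simpa [hp] using this
  obtain ⟨r, hr⟩ := Nat.exists_eq_add_of_le hle
  have hper : (σ ^ (p + 1)) x = x := by
    rw [← Equiv.Perm.iterate_eq_pow, ← hp]
    exact Function.iterate_minimalPeriod
  rw [hp, List.range_succ_eq_map, cycleList,
    show List.range n = List.range (p + (1 + r)) by rw [hr, add_assoc], List.range_add,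
    List.map_append, List.takeWhile_append_of_pos]
  · rw [add_comm 1 r, List.range_succ_eq_map]
    simp [hper, Function.comp_def]
  · intro y hy
    obtain ⟨k, hk, rfl⟩ := List.mem_map.1 hy
    rw [List.mem_range] at hk
    simp only [ne_eq, decide_eq_true_eq]
    intro h
    refine Function.not_isPeriodicPt_of_pos_of_lt_minimalPeriod (f := σ) (x := x)
      (n := k + 1) (by omega) (by omega) ?_
    rw [Function.IsPeriodicPt, Function.IsFixedPt, Equiv.Perm.iterate_eq_pow]
    exact h

theorem coe_cycleList (σ : Equiv.Perm (Fin n)) (x : Fin n) :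
    (cycleList σ x : Cycle (Fin n)) = Function.periodicOrbit σ x := by
  rw [cycleList_eq, Function.periodicOrbit_def]
  simp only [Equiv.Perm.iterate_eq_pow]

theorem mem_cycleList (σ : Equiv.Perm (Fin n)) (x y : Fin n) :
    y ∈ cycleList σ x ↔ σ.SameCycle x y := by
  rw [← Cycle.mem_coe_iff, coe_cycleList, Function.mem_periodicOrbit_iff (mem_periodicPts_perm σ x)]
  simp only [Equiv.Perm.iterate_eq_pow]
  constructor
  · rintro ⟨k, rfl⟩
    exact ⟨k, by simp⟩
  · intro h
    exact h.exists_nat_pow_eq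

theorem cycleList_isRotated {σ : Equiv.Perm (Fin n)} {x y : Fin n} (h : σ.SameCycle x y) :
    cycleList σ x ~r cycleList σ y := by
  obtain ⟨k, rfl⟩ := h.exists_nat_pow_eq
  rw [← Cycle.coe_eq_coe, coe_cycleList, coe_cycleList, ← Equiv.Perm.iterate_eq_pow,
    Function.periodicOrbit_apply_iterate_eq (mem_periodicPts_perm σ x)]

theorem cycleList_congr {σ ρ : Equiv.Perm (Fin n)} {x : Fin n}
    (h : ∀ k : ℕ, (σ ^ k) x = (ρ ^ k) x) : cycleList σ x = cycleList ρ x := by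
  simp only [cycleList, h]

theorem cycleList_conj (σ τ : Equiv.Perm (Fin n)) (x : Fin n) :
    cycleList (τ * σ * τ⁻¹) (τ x) = (cycleList σ x).map τ := by
  simp [cycleList, List.takeWhile_map, Function.comp_def]

theorem minimalPeriod_inv (σ : Equiv.Perm (Fin n)) (x : Fin n) :
    Function.minimalPeriod (σ⁻¹ : Equiv.Perm (Fin n)) x = Function.minimalPeriod σ x := by
  rw [Function.minimalPeriod_eq_minimalPeriod_iff]
  intro k
  simp only [Function.IsPeriodicPt, Function.IsFixedPt, Equiv.Perm.iterate_eq_pow]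
  rw [inv_pow, Equiv.Perm.inv_eq_iff_eq, eq_comm]

end Cycles

/-! ### Cycle products -/

section Products

variable {n : ℕ}

/-- The product of the entries of `A` along the cycle of `σ` through `x`, starting at `x`. -/
def cycProd (A : Matrix (Fin n) (Fin n) DualQuaternion) (σ : Equiv.Perm (Fin n)) (x : Fin n) :
    DualQuaternion :=
  ((cycleList σ x).map fun i => A i (σ i)).prod

theorem dqRe_cycProd_of_sameCycle (A : Matrix (Fin n) (Fin n) DualQuaternion)
    {σ : Equiv.Perm (Fin n)} {x y : Fin n} (h : σ.SameCycle x y) :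
    dqRe (cycProd A σ x) = dqRe (cycProd A σ y) :=
  dqRe_prod_of_isRotated ((cycleList_isRotated h).map _)

theorem cycProd_conj (A : Matrix (Fin n) (Fin n) DualQuaternion)
    (σ τ : Equiv.Perm (Fin n)) (x : Fin n) :
    cycProd A (τ * σ * τ⁻¹) (τ x) = cycProd (A.submatrix τ τ) σ x := by
  simp [cycProd, cycleList_conj, Function.comp_def]

theorem cycProd_congr (A : Matrix (Fin n) (Fin n) DualQuaternion) {σ ρ : Equiv.Perm (Fin n)}
    {x : Fin n} (h : ∀ k : ℕ, (σ ^ k) x = (ρ ^ k) x) : cycProd A σ x = cycProd A ρ x := by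
  have hp (θ : Equiv.Perm (Fin n)) : cycProd A θ x =
      ((List.range (Function.minimalPeriod θ x)).map
        fun k => A ((θ ^ k) x) ((θ ^ (k + 1)) x)).prod := by
    simp [cycProd, cycleList_eq, Function.comp_def, pow_succ']
  have hm : Function.minimalPeriod σ x = Function.minimalPeriod ρ x := by
    rw [Function.minimalPeriod_eq_minimalPeriod_iff]
    intro k
    simp only [Function.IsPeriodicPt, Function.IsFixedPt, Equiv.Perm.iterate_eq_pow, h]
  simp only [hp, hm, h]

/-- For a Hermitian matrix, running through a cycle backwards conjugates its product. -/
theorem cycProd_inv (A : Matrix (Fin n) (Fin n) DualQuaternion) (hA : Aᴴ = A)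
    (σ : Equiv.Perm (Fin n)) (x : Fin n) : cycProd A σ⁻¹ x = star (cycProd A σ x) := by
  have hs (i j : Fin n) : star (A i j) = A j i := by
    conv_rhs => rw [← hA]
    rfl
  have hper : (σ ^ Function.minimalPeriod σ x) x = x := by
    rw [← Equiv.Perm.iterate_eq_pow]
    exact Function.iterate_minimalPeriod
  rw [cycProd, cycProd, dq_star_prod, cycleList_eq, cycleList_eq, minimalPeriod_inv]
  simp only [List.map_map]
  have hrev (m : ℕ) : (List.range m).reverse = (List.range m).map fun k => m - 1 - k := by
    rw [List.range_eq_range', List.reverse_range', List.range_eq_range']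
    simp
  rw [← List.map_reverse, hrev, List.map_map]
  congr 1
  apply List.map_congr_left
  intro k hk
  rw [List.mem_range] at hk
  simp only [Function.comp_apply, hs]
  -- Going `a` steps backwards from `x` amounts to completing the cycle forwards.
  have key (a : ℕ) (ha : a ≤ Function.minimalPeriod σ x) :
      (σ⁻¹ ^ a) x = (σ ^ (Function.minimalPeriod σ x - a)) x := by
    rw [inv_pow, Equiv.Perm.inv_eq_iff_eq, ← Equiv.Perm.mul_apply, ← pow_add,
      Nat.add_sub_cancel' ha, hper]
  rw [← Equiv.Perm.mul_apply, ← Equiv.Perm.mul_apply, ← pow_succ', ← pow_succ', key k (by omega),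
    key (k + 1) (by omega)]
  rw [show Function.minimalPeriod σ x - 1 - k + 1 = Function.minimalPeriod σ x - k by omega,
    show Function.minimalPeriod σ x - 1 - k = Function.minimalPeriod σ x - (k + 1) by omega]

end Products

/-! ### Leaders -/

section Leaders

variable {n : ℕ}

/-- `x` is the largest element of its cycle under `σ`. -/
def IsLeader (σ : Equiv.Perm (Fin n)) (x : Fin n) : Prop :=
  ∀ y, σ.SameCycle x y → y ≤ x

open Classical in
/-- The set of leaders of `σ`; it has one element for each cycle. -/
def leaderSet (σ : Equiv.Perm (Fin n)) : Finset (Fin n) :=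
  Finset.univ.filter (IsLeader σ)

theorem mem_leaderSet {σ : Equiv.Perm (Fin n)} {x : Fin n} :
    x ∈ leaderSet σ ↔ IsLeader σ x := by
  simp [leaderSet]

open Classical in
theorem chenLeaders_eq (σ : Equiv.Perm (Fin n)) :
    chenLeaders σ = (List.finRange n).reverse.filter fun x => decide (IsLeader σ x) := by
  rw [chenLeaders, List.filter_reverse]
  congr 2
  funext x
  rw [Bool.eq_iff_iff]
  rw [decide_eq_true_iff]
  simp [mem_cycleList, IsLeader]

theorem length_chenLeaders (σ : Equiv.Perm (Fin n)) :
    (chenLeaders σ).length = (leaderSet σ).card := by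
  classical
  have hnd : (chenLeaders σ).Nodup := by
    rw [chenLeaders_eq]
    exact (List.nodup_reverse.2 (List.nodup_finRange n)).filter _
  rw [← List.toFinset_card_of_nodup hnd]
  congr 1
  ext x
  simp [chenLeaders_eq, mem_leaderSet]

/-- A set of representatives for the cycles of `σ`. -/
def IsTransversal (σ : Equiv.Perm (Fin n)) (S : Finset (Fin n)) : Prop :=
  (∀ x, ∃ s ∈ S, σ.SameCycle s x) ∧ ∀ s ∈ S, ∀ t ∈ S, σ.SameCycle s t → s = t

theorem isTransversal_leaderSet (σ : Equiv.Perm (Fin n)) : IsTransversal σ (leaderSet σ) := by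
  classical
  constructor
  · intro x
    obtain ⟨s, hs, hmax⟩ := (Finset.univ.filter (σ.SameCycle x)).exists_max_image id
      ⟨x, by simp [Equiv.Perm.SameCycle.refl]⟩
    simp only [Finset.mem_filter, Finset.mem_univ, true_and, id] at hs hmax
    exact ⟨s, mem_leaderSet.2 fun y hy => hmax y (hs.trans hy), hs.symm⟩
  · intro s hs t ht h
    exact le_antisymm (mem_leaderSet.1 ht s h.symm) (mem_leaderSet.1 hs t h)

theorem IsTransversal.image {σ : Equiv.Perm (Fin n)} {S : Finset (Fin n)}
    (h : IsTransversal σ S) (τ : Equiv.Perm (Fin n)) :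
    IsTransversal (τ * σ * τ⁻¹) (S.map τ.toEmbedding) := by
  constructor
  · intro x
    obtain ⟨s, hs, hx⟩ := h.1 (τ⁻¹ x)
    exact ⟨τ s, by simpa using hs, by simpa [Equiv.Perm.sameCycle_conj] using hx⟩
  · intro s hs t ht hst
    obtain ⟨s, hs', rfl⟩ := Finset.mem_map.1 hs
    obtain ⟨t, ht', rfl⟩ := Finset.mem_map.1 ht
    have : s = t := h.2 s hs' t ht' (by simpa [Equiv.Perm.sameCycle_conj] using hst)
    rw [this]

/-- A product over representatives of the cycles, of a function that is constant on cycles,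
does not depend on the representatives. -/
theorem IsTransversal.prod_eq {M : Type*} [CommMonoid M] {σ : Equiv.Perm (Fin n)}
    {S T : Finset (Fin n)} (hS : IsTransversal σ S) (hT : IsTransversal σ T) (f : Fin n → M)
    (hf : ∀ x y, σ.SameCycle x y → f x = f y) : ∏ x ∈ S, f x = ∏ x ∈ T, f x := by
  choose g hg hgs using hT.1
  refine Finset.prod_bij (fun x _ => g x) (fun x _ => hg x) ?_ ?_ ?_
  · intro x hx y hy h
    refine hS.2 x hx y hy ((hgs x).symm.trans ?_)
    rw [h]
    exact hgs y
  · intro t ht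
    obtain ⟨s, hs, hst⟩ := hS.1 t
    exact ⟨s, hs, hT.2 _ (hg s) t ht ((hgs s).trans hst)⟩
  · intro x _
    exact hf _ _ (hgs x).symm

theorem IsTransversal.card_eq {σ : Equiv.Perm (Fin n)}
    {S T : Finset (Fin n)} (hS : IsTransversal σ S) (hT : IsTransversal σ T) :
    S.card = T.card := by
  have := hS.prod_eq hT (fun _ => Multiplicative.ofAdd 1) (fun _ _ _ => rfl)
  simp only [Finset.prod_const, ← ofAdd_nsmul] at this
  simpa using this

end Leaders

/-! ### Inverting a single cycle -/

section Flip

variable {n : ℕ}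

open Classical in
/-- The permutation obtained from `σ` by inverting the cycle through `a`. -/
def flipCycle (a : Fin n) (σ : Equiv.Perm (Fin n)) : Equiv.Perm (Fin n) where
  toFun x := if σ.SameCycle a x then σ⁻¹ x else σ x
  invFun x := if σ.SameCycle a x then σ x else σ⁻¹ x
  left_inv x := by by_cases h : σ.SameCycle a x <;> simp [h]
  right_inv x := by by_cases h : σ.SameCycle a x <;> simp [h]

theorem flipCycle_apply_pos {a x : Fin n} {σ : Equiv.Perm (Fin n)} (h : σ.SameCycle a x) :
    flipCycle a σ x = σ⁻¹ x := if_pos h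

theorem flipCycle_apply_neg {a x : Fin n} {σ : Equiv.Perm (Fin n)} (h : ¬ σ.SameCycle a x) :
    flipCycle a σ x = σ x := if_neg h

theorem flipCycle_pow_pos {a x : Fin n} {σ : Equiv.Perm (Fin n)} (h : σ.SameCycle a x) (k : ℕ) :
    (flipCycle a σ ^ k) x = (σ⁻¹ ^ k) x := by
  induction k with
  | zero => rfl
  | succ k ih =>
    rw [pow_succ', pow_succ', Equiv.Perm.mul_apply, Equiv.Perm.mul_apply, ih, flipCycle_apply_pos]
    rw [← Equiv.Perm.sameCycle_inv, Equiv.Perm.sameCycle_pow_right, Equiv.Perm.sameCycle_inv]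
    exact h

theorem flipCycle_pow_neg {a x : Fin n} {σ : Equiv.Perm (Fin n)} (h : ¬ σ.SameCycle a x) (k : ℕ) :
    (flipCycle a σ ^ k) x = (σ ^ k) x := by
  induction k with
  | zero => rfl
  | succ k ih =>
    rw [pow_succ', pow_succ', Equiv.Perm.mul_apply, Equiv.Perm.mul_apply, ih, flipCycle_apply_neg]
    rwa [Equiv.Perm.sameCycle_pow_right]

theorem sameCycle_flipCycle (a : Fin n) (σ : Equiv.Perm (Fin n)) (x y : Fin n) :
    (flipCycle a σ).SameCycle x y ↔ σ.SameCycle x y := by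
  by_cases h : σ.SameCycle a x
  · rw [← mem_cycleList, cycleList_congr (flipCycle_pow_pos h), mem_cycleList,
      Equiv.Perm.sameCycle_inv]
  · rw [← mem_cycleList, cycleList_congr (flipCycle_pow_neg h), mem_cycleList]

theorem flipCycle_flipCycle (a : Fin n) (σ : Equiv.Perm (Fin n)) :
    flipCycle a (flipCycle a σ) = σ := by
  ext x
  by_cases h : σ.SameCycle a x
  · rw [flipCycle_apply_pos ((sameCycle_flipCycle a σ a x).2 h), Equiv.Perm.inv_eq_iff_eq.2]
    rw [flipCycle_apply_pos (by simpa using h)]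
    simp
  · rw [flipCycle_apply_neg (mt (sameCycle_flipCycle a σ a x).1 h), flipCycle_apply_neg h]

theorem isLeader_flipCycle (a : Fin n) (σ : Equiv.Perm (Fin n)) (x : Fin n) :
    IsLeader (flipCycle a σ) x ↔ IsLeader σ x := by
  simp only [IsLeader, sameCycle_flipCycle]

theorem leaderSet_flipCycle (a : Fin n) (σ : Equiv.Perm (Fin n)) :
    leaderSet (flipCycle a σ) = leaderSet σ := by
  ext x
  simp only [mem_leaderSet, isLeader_flipCycle]

open Classical in
/-- Inversion of the cycle led by `a`; permutations in which `a` leads no cycle are fixed. -/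
def flipLeader (a : Fin n) (σ : Equiv.Perm (Fin n)) : Equiv.Perm (Fin n) :=
  if IsLeader σ a then flipCycle a σ else σ

theorem flipLeader_involutive (a : Fin n) :
    Function.Involutive (flipLeader a : Equiv.Perm (Fin n) → Equiv.Perm (Fin n)) := by
  intro σ
  by_cases h : IsLeader σ a
  · simp [flipLeader, h, isLeader_flipCycle, flipCycle_flipCycle]
  · simp [flipLeader, h]

end Flip

/-! ### Replacing cycle products by their real parts -/

section Hybrid

variable {n : ℕ}

open Classical in
/-- The factor contributed by `x` to the term of `σ`: trivial unless `x` is a leader, and then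
the product of its cycle, replaced by its real part when `x ∈ S`. -/
def hybridFactor (A : Matrix (Fin n) (Fin n) DualQuaternion) (S : Finset (Fin n))
    (σ : Equiv.Perm (Fin n)) (x : Fin n) : DualQuaternion :=
  if IsLeader σ x then
    if x ∈ S then toDQ (dqRe (cycProd A σ x)) else cycProd A σ x
  else 1

/-- The signed term of `σ` in the Chen determinant, with the products of the cycles led by an
element of `S` replaced by their real parts. -/
def hybridTerm (A : Matrix (Fin n) (Fin n) DualQuaternion) (S : Finset (Fin n))
    (σ : Equiv.Perm (Fin n)) : DualQuaternion :=
  (-1) ^ (n - (leaderSet σ).card) * ((List.finRange n).reverse.map (hybridFactor A S σ)).prod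

theorem prod_map_filter {α M : Type*} [Monoid M] (l : List α) (p : α → Prop) [DecidablePred p]
    (f : α → M) :
    ((l.filter fun x => decide (p x)).map f).prod
      = (l.map fun x => if p x then f x else 1).prod := by
  induction l with
  | nil => rfl
  | cons a l ih => by_cases h : p a <;> simp [h, ih]

theorem Cdet_eq_sum_hybridTerm_empty (A : Matrix (Fin n) (Fin n) DualQuaternion) :
    Cdet A = ∑ σ, hybridTerm A ∅ σ := by
  classical
  refine Finset.sum_congr rfl fun σ _ => ?_
  rw [hybridTerm, length_chenLeaders, chenOrder, List.map_flatten, List.prod_flatten, List.map_map,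
    List.map_map, chenLeaders_eq, prod_map_filter]
  rfl

/-- Pairing `σ` with `flipLeader a σ` turns the product of the cycle led by `a` into the mean of
that product and its conjugate, which is its real part. -/
theorem hybridTerm_sub_add (A : Matrix (Fin n) (Fin n) DualQuaternion) (hA : Aᴴ = A)
    (S : Finset (Fin n)) (a : Fin n) (ha : a ∉ S) (σ : Equiv.Perm (Fin n)) :
    (hybridTerm A S σ - hybridTerm A (insert a S) σ)
      + (hybridTerm A S (flipLeader a σ) - hybridTerm A (insert a S) (flipLeader a σ)) = 0 := by
  have hins (ρ : Equiv.Perm (Fin n)) (x : Fin n) (hx : x ≠ a) :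
      hybridFactor A (insert a S) ρ x = hybridFactor A S ρ x := by
    simp [hybridFactor, hx]
  by_cases h : IsLeader σ a
  · have hflip (x : Fin n) (hx : x ≠ a) :
        hybridFactor A S (flipCycle a σ) x = hybridFactor A S σ x := by
      by_cases hl : IsLeader σ x
      · have hc : ¬ σ.SameCycle a x := fun hc => hx (le_antisymm (h x hc) (hl a hc.symm))
        simp [hybridFactor, hl, (isLeader_flipCycle a σ x).2 hl,
          cycProd_congr A (flipCycle_pow_neg hc)]
      · simp [hybridFactor, mt (isLeader_flipCycle a σ x).1 hl, hl]
    have hstar : cycProd A (flipCycle a σ) a = star (cycProd A σ a) := by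
      rw [cycProd_congr A (flipCycle_pow_pos (Equiv.Perm.SameCycle.refl σ a)), cycProd_inv A hA]
    obtain ⟨l₁, l₂, hl⟩ := List.append_of_mem
      (List.mem_reverse.2 (List.mem_finRange a))
    have hnd : (l₁ ++ a :: l₂).Nodup := hl ▸ List.nodup_reverse.2 (List.nodup_finRange n)
    have h₁ : ∀ x ∈ l₁, x ≠ a := by
      rintro x hx rfl
      exact (List.nodup_append.1 hnd).2.2 x hx x (by simp) rfl
    have h₂ : ∀ x ∈ l₂, x ≠ a := by
      rintro x hx rfl
      exact (List.nodup_cons.1 (List.nodup_append.1 hnd).2.1).1 hx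
    have split (f g : Fin n → DualQuaternion) (hfg : ∀ x, x ≠ a → f x = g x) :
        ((List.finRange n).reverse.map f).prod
          = (l₁.map g).prod * f a * (l₂.map g).prod := by
      rw [hl, List.map_append, List.map_cons, List.prod_append, List.prod_cons, mul_assoc,
        List.map_congr_left fun x hx => hfg x (h₁ x hx),
        List.map_congr_left fun x hx => hfg x (h₂ x hx)]
    simp only [hybridTerm, flipLeader, if_pos h, leaderSet_flipCycle]
    rw [split _ (hybridFactor A S σ) (fun _ _ => rfl), split _ _ (hins σ),
      split _ _ hflip, split _ (hybridFactor A S σ) fun x hx => (hins _ x hx).trans (hflip x hx),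
      ← mul_sub, ← mul_sub, ← mul_add, ← sub_mul, ← sub_mul, ← add_mul, ← mul_sub, ← mul_sub,
      ← mul_add]
    have hzero : hybridFactor A S σ a - hybridFactor A (insert a S) σ a
        + (hybridFactor A S (flipCycle a σ) a
          - hybridFactor A (insert a S) (flipCycle a σ) a) = 0 := by
      simp only [hybridFactor, if_pos ((isLeader_flipCycle a σ a).2 h), if_pos h, if_neg ha, Finset.mem_insert_self,
        if_true, hstar, dqRe_star]
      rw [sub_add_sub_comm, add_star_eq, sub_self]
    rw [hzero]
    simp
  · have : hybridFactor A (insert a S) σ = hybridFactor A S σ := by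
      funext x
      by_cases hx : x = a
      · subst hx
        simp [hybridFactor, h]
      · exact hins σ x hx
    simp [hybridTerm, flipLeader, h, this]

theorem sum_hybridTerm_insert (A : Matrix (Fin n) (Fin n) DualQuaternion) (hA : Aᴴ = A)
    (S : Finset (Fin n)) (a : Fin n) (ha : a ∉ S) :
    ∑ σ, hybridTerm A S σ = ∑ σ, hybridTerm A (insert a S) σ := by
  rw [← sub_eq_zero, ← Finset.sum_sub_distrib]
  set D : Equiv.Perm (Fin n) → DualQuaternion :=
    fun σ => hybridTerm A S σ - hybridTerm A (insert a S) σ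
  have h1 : ∑ σ, D (flipLeader a σ) = ∑ σ, D σ :=
    Equiv.sum_comp (Function.Involutive.toPerm _ (flipLeader_involutive a)) D
  have h2 : ∑ σ, D σ + ∑ σ, D σ = 0 := by
    nth_rewrite 2 [← h1]
    rw [← Finset.sum_add_distrib]
    exact Finset.sum_eq_zero fun σ _ => hybridTerm_sub_add A hA S a ha σ
  calc ∑ σ, D σ = (1 / 2 : ℝ) • (∑ σ, D σ + ∑ σ, D σ) := by
        rw [← two_smul ℝ, smul_smul]
        norm_num
    _ = 0 := by rw [h2, smul_zero]

theorem Cdet_eq_sum_hybridTerm (A : Matrix (Fin n) (Fin n) DualQuaternion) (hA : Aᴴ = A)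
    (S : Finset (Fin n)) : Cdet A = ∑ σ, hybridTerm A S σ := by
  classical
  induction S using Finset.induction_on with
  | empty => exact Cdet_eq_sum_hybridTerm_empty A
  | insert a S ha ih => rw [ih, sum_hybridTerm_insert A hA S a ha]

/-- Once every cycle product is replaced by its real part, the order of the factors is
immaterial. -/
theorem hybridTerm_univ (A : Matrix (Fin n) (Fin n) DualQuaternion) (σ : Equiv.Perm (Fin n)) :
    hybridTerm A Finset.univ σ = (-1) ^ (n - (leaderSet σ).card)
      * toDQ (∏ x ∈ leaderSet σ, dqRe (cycProd A σ x)) := by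
  classical
  have hfac : hybridFactor A Finset.univ σ
      = toDQHom ∘ fun x => if IsLeader σ x then dqRe (cycProd A σ x) else 1 := by
    funext x
    by_cases h : IsLeader σ x
    · simp [hybridFactor, h, toDQHom]
    · simp [hybridFactor, h]
  rw [hybridTerm, hfac, ← List.map_map, ← map_list_prod, List.map_reverse,
    List.prod_reverse, ← List.ofFn_eq_map, List.prod_ofFn, leaderSet, Finset.prod_filter]
  rfl

/-- For a Hermitian matrix the Chen determinant is invariant under simultaneous permutation of
rows and columns. -/
theorem Cdet_submatrix (A : Matrix (Fin n) (Fin n) DualQuaternion) (hA : Aᴴ = A)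
    (τ : Equiv.Perm (Fin n)) : Cdet (A.submatrix τ τ) = Cdet A := by
  have hA' : (A.submatrix τ τ)ᴴ = A.submatrix τ τ := by
    rw [Matrix.conjTranspose_submatrix, hA]
  rw [Cdet_eq_sum_hybridTerm _ hA' Finset.univ, Cdet_eq_sum_hybridTerm _ hA Finset.univ,
    ← Equiv.sum_comp (MulAut.conj τ).toEquiv (hybridTerm A Finset.univ)]
  refine Finset.sum_congr rfl fun σ _ => ?_
  have hT := (isTransversal_leaderSet σ).image τ
  have hL := isTransversal_leaderSet (τ * σ * τ⁻¹)
  change _ = hybridTerm A Finset.univ (τ * σ * τ⁻¹)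
  rw [hybridTerm_univ, hybridTerm_univ, hL.card_eq hT, Finset.card_map,
    hL.prod_eq hT _ fun x y h => dqRe_cycProd_of_sameCycle A h, Finset.prod_map]
  simp only [Equiv.coe_toEmbedding, cycProd_conj]

theorem switchMatrix_conj (A : Matrix (Fin n) (Fin n) DualQuaternion) (i j : Fin n) :
    (switchMatrix i j)ᴴ * A * switchMatrix i j
      = A.submatrix (Equiv.swap i j) (Equiv.swap i j) := by
  -- For `i = j` the defining condition of `switchMatrix` still gives the identity matrix.
  have hP (k l : Fin n) : (switchMatrix i j : Matrix (Fin n) (Fin n) DualQuaternion) k l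
      = if k = Equiv.swap i j l then 1 else 0 := by
    simp only [switchMatrix, Matrix.of_apply, Equiv.swap_apply_def]
    congr 1
    rw [eq_iff_iff]
    split_ifs <;> grind
  ext1 k l
  simp [Matrix.mul_apply, Matrix.conjTranspose_apply, hP, apply_ite star, dq_star_one,
    dq_star_zero]

end Hybrid

/-- The Chen determinant of a dual quaternion Hermitian matrix is invariant under the
two-sided switching operation: `Cdet(P_{ij}* A P_{ij}) = Cdet(A)`. -/
theorem statement5 {n : ℕ} (A : Matrix (Fin n) (Fin n) DualQuaternion) (hA : Aᴴ = A)
    (i j : Fin n) :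
    Cdet ((switchMatrix i j)ᴴ * A * switchMatrix i j) = Cdet A := by
  rw [switchMatrix_conj, Cdet_submatrix A hA]

end DQPaper
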